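/- For every 3-component long link f, every ε > 0 and every 2-form η as specified, the configuration space integrals I_{𝒳₁}(f), I_{𝒳₂}(f), I_{𝒳₃}(f) and I_𝒴(f) converge absolutely. -/

import Mathlib

open MeasureTheory Filter Topology Set

noncomputable section

abbrev E2 : Type := EuclideanSpace ℝ (Fin 2)
abbrev E3 : Type := EuclideanSpace ℝ (Fin 3)
abbrev E4 : Type := EuclideanSpace ℝ (Fin 4)
abbrev E6 : Type := EuclideanSpace ℝ (Fin 6)

/-- The point of `ℝ³` with the given coordinates. -/
def mk3 (x y z : ℝ) : E3 := (WithLp.equiv 2 (Fin 3 → ℝ)).symm ![x, y, z]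

/-- The north pole `N = (0,0,1)` of `S² ⊆ ℝ³`. -/
def NP : E3 := mk3 0 0 1

/-- Projection of `ℝ³` onto the plane `N^⊥` (the first two coordinates). -/
def pr12 (v : E3) : ℝ × ℝ := (v 0, v 1)

/-- The `N`-coordinate. -/
def pr3 (v : E3) : ℝ := v 2

/-- `unitv v = v / ‖v‖`. -/
def unitv (v : E3) : E3 := ‖v‖⁻¹ • v

/-- Determinant of the projections to `N^⊥` of two vectors (first vector, then second). -/
def cross2 (a b : E3) : ℝ := a 0 * b 1 - a 1 * b 0

/-- 3×3 determinant (scalar triple product); for `p ∈ S²` and `v, w` tangent to `S²` at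
`p`, this is the value of the standard area form of `S²` at `p` on `(v, w)`. -/
def det3 (p v w : E3) : ℝ :=
  p 0 * (v 1 * w 2 - v 2 * w 1) - p 1 * (v 0 * w 2 - v 2 * w 0) +
    p 2 * (v 0 * w 1 - v 1 * w 0)

/-! ### Long knots and 3-component long links -/

/-- A long knot: a smooth embedding `ℝ ↪ ℝ³` which is standard outside `[-1,1]`. -/
def IsLongKnot (f : ℝ → E3) : Prop :=
  ContDiff ℝ (⊤ : ℕ∞) f ∧ Function.Injective f ∧ (∀ t, deriv f t ≠ 0) ∧
    ∀ x : ℝ, 1 ≤ |x| → f x = mk3 x 0 0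

/-- Smooth isotopy of long knots. -/
def KnotIsotopic (f₀ f₁ : ℝ → E3) : Prop :=
  ∃ H : ℝ → ℝ → E3,
    ContDiff ℝ (⊤ : ℕ∞) (fun p : ℝ × ℝ => H p.1 p.2) ∧
    (∀ s, IsLongKnot (H s)) ∧ H 0 = f₀ ∧ H 1 = f₁

/-- A 3-component long link: a smooth embedding `ℝ ⊔ ℝ ⊔ ℝ ↪ ℝ³`, standard outside
`[-1,1]`, component `k` (for `k = 1,2,3`, i.e. index `i = k - 1 : Fin 3`) having ends
`x ↦ (x, (2 - k)|x|, 0)`. -/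
def IsLongLink3 (f : Fin 3 → ℝ → E3) : Prop :=
  (∀ i, ContDiff ℝ (⊤ : ℕ∞) (f i)) ∧
  (∀ i j s t, f i s = f j t → i = j ∧ s = t) ∧
  (∀ i t, deriv (f i) t ≠ 0) ∧
  ∀ i (x : ℝ), 1 ≤ |x| → f i x = mk3 x ((1 - ((i : ℕ) : ℝ)) * |x|) 0

/-- Smooth isotopy of 3-component long links. -/
def LinkIsotopic (f₀ f₁ : Fin 3 → ℝ → E3) : Prop :=
  ∃ H : ℝ → Fin 3 → ℝ → E3,
    (∀ i, ContDiff ℝ (⊤ : ℕ∞) (fun p : ℝ × ℝ => H p.1 i p.2)) ∧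
    (∀ s, IsLongLink3 (H s)) ∧ H 0 = f₀ ∧ H 1 = f₁

/-! ### Diagrams, crossings and Gauss diagram pairings -/

/-- All self-intersections of the projection of the long knot `f` are transverse
(any two branches meeting at a multiple point have independent projected tangents). -/
def TransverseK (f : ℝ → E3) : Prop :=
  ∀ t u, t ≠ u → pr12 (f t) = pr12 (f u) → cross2 (deriv f t) (deriv f u) ≠ 0

/-- The diagram of `f` has only transverse double points. -/
def OnlyDoubleK (f : ℝ → E3) : Prop :=
  TransverseK f ∧
  ∀ t u v : ℝ, t ≠ u → u ≠ v → t ≠ v →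
    pr12 (f t) = pr12 (f u) → pr12 (f u) = pr12 (f v) → False

/-- All self-intersections of the projection of the long link `f` are transverse. -/
def TransverseL (f : Fin 3 → ℝ → E3) : Prop :=
  ∀ i j s t, (i, s) ≠ (j, t) → pr12 (f i s) = pr12 (f j t) →
    cross2 (deriv (f i) s) (deriv (f j) t) ≠ 0

/-- The diagram of the long link `f` has only transverse double points. -/
def OnlyDoubleL (f : Fin 3 → ℝ → E3) : Prop :=
  TransverseL f ∧
  ∀ i j k s t u, (i, s) ≠ (j, t) → (j, t) ≠ (k, u) → (i, s) ≠ (k, u) →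
    pr12 (f i s) = pr12 (f j t) → pr12 (f j t) = pr12 (f k u) → False

/-- Crossings of a long knot diagram: pairs `(t, u)` with `t` on the lower and `u` on the
upper strand; the corresponding chord of the Gauss diagram is directed from `t` to `u`. -/
def CrossingK (f : ℝ → E3) : Set (ℝ × ℝ) :=
  {p | p.1 ≠ p.2 ∧ pr12 (f p.1) = pr12 (f p.2) ∧ pr3 (f p.1) < pr3 (f p.2)}

/-- The sign of the crossing `p = (t, u)` (`+1` iff the projected tangent of the
over-strand followed by that of the under-strand is a positive basis of `N^⊥`). -/
def csignK (f : ℝ → E3) (p : ℝ × ℝ) : ℝ :=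
  Real.sign (cross2 (deriv f p.2) (deriv f p.1))

/-- Gauss diagram pairing for a long knot: the sum, over all pairs of chords of the Gauss
diagram of `f` in the relative position prescribed by `R`, of the products of signs. -/
def pairK (f : ℝ → E3) (R : ℝ × ℝ → ℝ × ℝ → Prop) : ℝ :=
  ∑ᶠ q ∈ {q : (ℝ × ℝ) × (ℝ × ℝ) | q.1 ∈ CrossingK f ∧ q.2 ∈ CrossingK f ∧ R q.1 q.2},
    csignK f q.1 * csignK f q.2

/-- `⟨X, G_D⟩` : chords `x₁ → x₃` and `x₄ → x₂` with `x₁ < x₂ < x₃ < x₄`. -/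
def pairXK (f : ℝ → E3) : ℝ :=
  pairK f fun p q => p.1 < q.2 ∧ q.2 < p.2 ∧ p.2 < q.1

/-- `⟨X′₁, G_D⟩` : chords `a → b` and `c → a` with `a < b < c`. -/
def pairX1K (f : ℝ → E3) : ℝ :=
  pairK f fun p q => q.2 = p.1 ∧ p.1 < p.2 ∧ p.2 < q.1

/-- `⟨X′₂, G_D⟩` : chords `a → b` and `c → b` with `a < b < c`. -/
def pairX2K (f : ℝ → E3) : ℝ :=
  pairK f fun p q => q.2 = p.2 ∧ p.1 < p.2 ∧ p.2 < q.1

/-- `⟨X′₃, G_D⟩` : chords `a → c` and `c → b` with `a < b < c`. -/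
def pairX3K (f : ℝ → E3) : ℝ :=
  pairK f fun p q => p.2 = q.1 ∧ p.1 < q.2 ∧ q.2 < p.2

/-- Crossings of a 3-strand diagram between strand `i` (under) and strand `j` (over);
the corresponding chord is directed from `p.1` on strand `i` to `p.2` on strand `j`. -/
def CrossingL (f : Fin 3 → ℝ → E3) (i j : Fin 3) : Set (ℝ × ℝ) :=
  {p | pr12 (f i p.1) = pr12 (f j p.2) ∧ pr3 (f i p.1) < pr3 (f j p.2)}

/-- The sign of the crossing `p` between strand `i` (under) and strand `j` (over). -/
def csignL (f : Fin 3 → ℝ → E3) (i j : Fin 3) (p : ℝ × ℝ) : ℝ :=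
  Real.sign (cross2 (deriv (f j) p.2) (deriv (f i) p.1))

/-- Gauss diagram pairing for a 3-component long link. -/
def pairL (f : Fin 3 → ℝ → E3) (i₁ j₁ i₂ j₂ : Fin 3) (R : ℝ × ℝ → ℝ × ℝ → Prop) : ℝ :=
  ∑ᶠ q ∈ {q : (ℝ × ℝ) × (ℝ × ℝ) |
      q.1 ∈ CrossingL f i₁ j₁ ∧ q.2 ∈ CrossingL f i₂ j₂ ∧ R q.1 q.2},
    csignL f i₁ j₁ q.1 * csignL f i₂ j₂ q.2

/-- `⟨𝒳₁, G_D⟩` : a chord from `t` on strand 1 to strand 2, and a chord from strand 3 to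
`t′` on strand 1, with `t < t′`. -/
def pairL1 (f : Fin 3 → ℝ → E3) : ℝ := pairL f 0 1 2 0 fun p q => p.1 < q.2

/-- `⟨𝒳₂, G_D⟩` : a chord from strand 1 to `u` on strand 2, and a chord from strand 3 to
`u′` on strand 2, with `u < u′`. -/
def pairL2 (f : Fin 3 → ℝ → E3) : ℝ := pairL f 0 1 2 1 fun p q => p.2 < q.2

/-- `⟨𝒳₃, G_D⟩` : a chord from strand 1 to `v` on strand 3, and a chord from `v′` on
strand 3 to strand 2, with `v < v′`. -/
def pairL3 (f : Fin 3 → ℝ → E3) : ℝ := pairL f 0 2 2 1 fun p q => p.2 < q.1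

/-- `⟨𝒳′₁, G_D⟩` : as `𝒳₁` but with `t = t′` (a triple point). -/
def pairL1' (f : Fin 3 → ℝ → E3) : ℝ := pairL f 0 1 2 0 fun p q => p.1 = q.2

/-- `⟨𝒳′₂, G_D⟩` : as `𝒳₂` but with `u = u′` (a triple point). -/
def pairL2' (f : Fin 3 → ℝ → E3) : ℝ := pairL f 0 1 2 1 fun p q => p.2 = q.2

/-- `⟨𝒳′₃, G_D⟩` : as `𝒳₃` but with `v = v′` (a triple point). -/
def pairL3' (f : Fin 3 → ℝ → E3) : ℝ := pairL f 0 2 2 1 fun p q => p.2 = q.1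

/-! ### The localized unit 2-form `η` on `S²` -/

/-- The action of a 2×2 matrix on `ℝ³ = ℝ² × ℝ`, acting on the first two coordinates. -/
def act2 (A : Matrix (Fin 2) (Fin 2) ℝ) (v : E3) : E3 :=
  mk3 (A 0 0 * v 0 + A 0 1 * v 1) (A 1 0 * v 0 + A 1 1 * v 1) (v 2)

/-- `IsEtaForm ε g` says that `η = g · (standard area form of S²)` is a smooth 2-form on
`S²` such that: (i) `supp η` lies in the `ε`-neighbourhood of the north pole `N`;
(ii) `φ*η = det φ · η` for every `φ ∈ O(2) ⊆ O(3)` (since `φ* (area form) = det φ ·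
(area form)`, this amounts to `g ∘ φ = g`); (iii) `∫_{S²} η = 1`, i.e. the integral of
`g` against the surface measure of `S²` is `1`. -/
def IsEtaForm (ε : ℝ) (g : E3 → ℝ) : Prop :=
  ContDiff ℝ (⊤ : ℕ∞) g ∧
  (∀ v : E3, ‖v‖ = 1 → g v ≠ 0 → ‖v - NP‖ < ε) ∧
  (∀ A : Matrix (Fin 2) (Fin 2) ℝ, A * A.transpose = 1 →
    ∀ v : E3, ‖v‖ = 1 → g (act2 A v) = g v) ∧
  ∫ v : Metric.sphere (0 : E3) 1, g v ∂((volume : Measure E3).toSphere) = 1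

/-! ### Configuration space integrals -/

/-- `i`-th partial derivative of a map `ℝⁿ → ℝ³`. -/
def pdv {n : ℕ} (h : EuclideanSpace ℝ (Fin n) → E3) (i : Fin n)
    (x : EuclideanSpace ℝ (Fin n)) : E3 :=
  fderiv ℝ h x (EuclideanSpace.single i 1)

/-- The pullback `h*η` (for `η = g · (area form)`) evaluated at the point `x` on the
coordinate vectors `(e_i, e_j)`. -/
def form2 {n : ℕ} (g : E3 → ℝ) (h : EuclideanSpace ℝ (Fin n) → E3)
    (x : EuclideanSpace ℝ (Fin n)) (i j : Fin n) : ℝ :=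
  g (h x) * det3 (h x) (pdv h i x) (pdv h j x)

/-- `(h*η ∧ k*η)(e₀, e₁, e₂, e₃)` at `x`. -/
def wedge22 (g : E3 → ℝ) (h k : E4 → E3) (x : E4) : ℝ :=
  (1 / 4) * ∑ σ : Equiv.Perm (Fin 4),
    ((Equiv.Perm.sign σ : ℤ) : ℝ) * form2 g h x (σ 0) (σ 1) * form2 g k x (σ 2) (σ 3)

/-- `(h*η ∧ k*η ∧ l*η)(e₀, …, e₅)` at `x`. -/
def wedge222 (g : E3 → ℝ) (h k l : E6 → E3) (x : E6) : ℝ :=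
  (1 / 8) * ∑ σ : Equiv.Perm (Fin 6),
    ((Equiv.Perm.sign σ : ℤ) : ℝ) * form2 g h x (σ 0) (σ 1) * form2 g k x (σ 2) (σ 3) *
      form2 g l x (σ 4) (σ 5)

/-- The configuration space `C_X = {x₁ < x₂ < x₃ < x₄}`. -/
def CX : Set E4 := {x | x 0 < x 1 ∧ x 1 < x 2 ∧ x 2 < x 3}

/-- The integrand `ω_X = h₁₃*η ∧ h₄₂*η` for a long knot. -/
def omegaX (f : ℝ → E3) (g : E3 → ℝ) : E4 → ℝ :=
  wedge22 g (fun x => unitv (f (x 2) - f (x 0))) (fun x => unitv (f (x 1) - f (x 3)))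

/-- The configuration space integral `I_X(f)` of a long knot. -/
def IX (f : ℝ → E3) (g : E3 → ℝ) : ℝ := ∫ x in CX, omegaX f g x

/-- The free point `x₄ ∈ ℝ³` in a `Y`-configuration `(x₁,x₂,x₃;x₄) ∈ ℝ³ × ℝ³ = ℝ⁶`. -/
def ptY (x : E6) : E3 := mk3 (x 3) (x 4) (x 5)

/-- The configuration space `C_Y(f)` for a long knot. -/
def CY (f : ℝ → E3) : Set E6 :=
  {x | x 0 < x 1 ∧ x 1 < x 2 ∧ ptY x ≠ f (x 0) ∧ ptY x ≠ f (x 1) ∧ ptY x ≠ f (x 2)}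

/-- The integrand `ω_Y = h₁₄*η ∧ h₄₂*η ∧ h₃₄*η` for a long knot. -/
def omegaY (f : ℝ → E3) (g : E3 → ℝ) : E6 → ℝ :=
  wedge222 g (fun x => unitv (ptY x - f (x 0))) (fun x => unitv (f (x 1) - ptY x))
    (fun x => unitv (ptY x - f (x 2)))

/-- The configuration space integral `I_Y(f)` of a long knot. -/
def IY (f : ℝ → E3) (g : E3 → ℝ) : ℝ := ∫ x in CY f, omegaY f g x

def CL1 : Set E4 := {x | x 0 < x 1}
def CL2 : Set E4 := {x | x 1 < x 2}
def CL3 : Set E4 := {x | x 2 < x 3}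

/-- The integrand of `I_{𝒳₁}(f)` for a 3-component long link. -/
def omegaL1 (f : Fin 3 → ℝ → E3) (g : E3 → ℝ) : E4 → ℝ :=
  wedge22 g (fun x => unitv (f 1 (x 2) - f 0 (x 0))) (fun x => unitv (f 2 (x 3) - f 0 (x 1)))

/-- The integrand of `I_{𝒳₂}(f)` for a 3-component long link. -/
def omegaL2 (f : Fin 3 → ℝ → E3) (g : E3 → ℝ) : E4 → ℝ :=
  wedge22 g (fun x => unitv (f 1 (x 1) - f 0 (x 0))) (fun x => unitv (f 1 (x 2) - f 2 (x 3)))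

/-- The integrand of `I_{𝒳₃}(f)` for a 3-component long link. -/
def omegaL3 (f : Fin 3 → ℝ → E3) (g : E3 → ℝ) : E4 → ℝ :=
  wedge22 g (fun x => unitv (f 2 (x 2) - f 0 (x 0))) (fun x => unitv (f 1 (x 1) - f 2 (x 3)))

/-- The configuration space integral `I_{𝒳₁}(f)`. -/
def IL1 (f : Fin 3 → ℝ → E3) (g : E3 → ℝ) : ℝ := ∫ x in CL1, omegaL1 f g x

/-- The configuration space integral `I_{𝒳₂}(f)`. -/
def IL2 (f : Fin 3 → ℝ → E3) (g : E3 → ℝ) : ℝ := ∫ x in CL2, omegaL2 f g x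

/-- The configuration space integral `I_{𝒳₃}(f)`. -/
def IL3 (f : Fin 3 → ℝ → E3) (g : E3 → ℝ) : ℝ := ∫ x in CL3, omegaL3 f g x

/-- The configuration space `C_𝒴(f)` for a 3-component long link. -/
def CYL (f : Fin 3 → ℝ → E3) : Set E6 :=
  {x | ptY x ≠ f 0 (x 0) ∧ ptY x ≠ f 1 (x 1) ∧ ptY x ≠ f 2 (x 2)}

/-- The integrand `ω_𝒴 = h₁₄*η ∧ h₄₂*η ∧ h₃₄*η` for a 3-component long link. -/
def omegaYL (f : Fin 3 → ℝ → E3) (g : E3 → ℝ) : E6 → ℝ :=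
  wedge222 g (fun x => unitv (ptY x - f 0 (x 0))) (fun x => unitv (f 1 (x 1) - ptY x))
    (fun x => unitv (ptY x - f 2 (x 2)))

/-- The configuration space integral `I_𝒴(f)`. -/
def ILY (f : Fin 3 → ℝ → E3) (g : E3 → ℝ) : ℝ := ∫ x in CYL f, omegaYL f g x

/-! ### Model triple points -/

/-- The affine parametrization `t ↦ a + t • v` of a straight segment. -/
def seg (a v : E3) (t : ℝ) : E3 := a + t • v

/-- A model triple point: three straight segments `S₁, S₂, S₃` (indexed by `0, 1, 2`),
`S_k` parametrized by `seg (a k) (v k) : (-δ, δ) → ℝ³`, all parallel to the plane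
`N^⊥`, whose projections to `N^⊥` meet pairwise transversely at the single common point
which is the projection of each midpoint `a k`, and with `S₂` higher than `S₁`, `S₃`. -/
def IsModelTriple (a v : Fin 3 → E3) : Prop :=
  (∀ k, v k 2 = 0) ∧ (∀ k, v k ≠ 0) ∧
  pr12 (a 0) = pr12 (a 1) ∧ pr12 (a 1) = pr12 (a 2) ∧
  (∀ j k, j ≠ k → cross2 (v j) (v k) ≠ 0) ∧
  a 0 2 < a 1 2 ∧ a 2 2 < a 1 2

/-- A model triple point of type `(←, s₁, s₂, s₃)`: `S₁` passes over `S₃`, and the signs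
of the crossings `S₁–S₃`, `S₁–S₂`, `S₂–S₃` are `s₁, s₂, s₃` respectively. -/
def ModelLeft (a v : Fin 3 → E3) (s1 s2 s3 : ℝ) : Prop :=
  IsModelTriple a v ∧ a 2 2 < a 0 2 ∧
  s1 = Real.sign (cross2 (v 0) (v 2)) ∧
  s2 = Real.sign (cross2 (v 1) (v 0)) ∧
  s3 = Real.sign (cross2 (v 1) (v 2))

/-- A model triple point of type `(→, s₁, s₂, s₃)`: `S₃` passes over `S₁`, and the signs
of the crossings `S₁–S₃`, `S₁–S₂`, `S₂–S₃` are `s₁, s₂, s₃` respectively. -/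
def ModelRight (a v : Fin 3 → E3) (s1 s2 s3 : ℝ) : Prop :=
  IsModelTriple a v ∧ a 0 2 < a 2 2 ∧
  s1 = Real.sign (cross2 (v 2) (v 0)) ∧
  s2 = Real.sign (cross2 (v 1) (v 0)) ∧
  s3 = Real.sign (cross2 (v 1) (v 2))

/-- The cube `(-δ, δ)⁴ ⊆ ℝ⁴`. -/
def cube4 (δ : ℝ) : Set E4 := {x | ∀ i, |x i| < δ}

/-- The model configuration space integral `I_X^{X′₁}`: the two points `t₁ < t₂` lie on
`S₁`, the point `t₃` on `S₂` and the point `t₄` on `S₃`; the maps are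
`h₁₃ = unit (f₂(t₃) - f₁(t₁))` and `h₄₂ = unit (f₁(t₂) - f₃(t₄))`. -/
def IX1model (a v : Fin 3 → E3) (δ : ℝ) (g : E3 → ℝ) : ℝ :=
  ∫ x in cube4 δ ∩ {x : E4 | x 0 < x 1},
    wedge22 g (fun x => unitv (seg (a 1) (v 1) (x 2) - seg (a 0) (v 0) (x 0)))
      (fun x => unitv (seg (a 0) (v 0) (x 1) - seg (a 2) (v 2) (x 3))) x

/-- The model configuration space integral `I_X^{X′₂}` (`(X′₂, l)` for a model of type
`←`, `(X′₂, r)` for a model of type `→`): the two points `t₂ < t₃` lie on `S₂`, the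
point `t₁` on `S₁` and the point `t₄` on `S₃`; the maps are
`h₁₃ = unit (f₂(t₃) - f₁(t₁))` and `h₄₂ = unit (f₂(t₂) - f₃(t₄))`. -/
def IX2model (a v : Fin 3 → E3) (δ : ℝ) (g : E3 → ℝ) : ℝ :=
  ∫ x in cube4 δ ∩ {x : E4 | x 1 < x 2},
    wedge22 g (fun x => unitv (seg (a 1) (v 1) (x 2) - seg (a 0) (v 0) (x 0)))
      (fun x => unitv (seg (a 1) (v 1) (x 1) - seg (a 2) (v 2) (x 3))) x

/-- The model configuration space integral `I_X^{X′₃}`: the two points `t₃ < t₄` lie on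
`S₃`, the point `t₁` on `S₁` and the point `t₂` on `S₂`; the maps are
`h₁₃ = unit (f₃(t₃) - f₁(t₁))` and `h₄₂ = unit (f₂(t₂) - f₃(t₄))`. -/
def IX3model (a v : Fin 3 → E3) (δ : ℝ) (g : E3 → ℝ) : ℝ :=
  ∫ x in cube4 δ ∩ {x : E4 | x 2 < x 3},
    wedge22 g (fun x => unitv (seg (a 2) (v 2) (x 2) - seg (a 0) (v 0) (x 0)))
      (fun x => unitv (seg (a 1) (v 1) (x 1) - seg (a 2) (v 2) (x 3))) x

/-- The model `Y`-integral `I_Y^{s₁,s₂,s₃}` over `(-δ,δ)³ × ℝ³`: the point `t_k` lies on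
`S_k` and `x₄ ∈ ℝ³` is free; the maps are `h₁₄ = unit (x₄ - f₁(t₁))`,
`h₄₂ = unit (f₂(t₂) - x₄)` and `h₃₄ = unit (x₄ - f₃(t₃))`. -/
def IYmodel (a v : Fin 3 → E3) (δ : ℝ) (g : E3 → ℝ) : ℝ :=
  ∫ x in {x : E6 | |x 0| < δ ∧ |x 1| < δ ∧ |x 2| < δ ∧
      ptY x ≠ seg (a 0) (v 0) (x 0) ∧ ptY x ≠ seg (a 1) (v 1) (x 1) ∧
      ptY x ≠ seg (a 2) (v 2) (x 2)},
    wedge222 g (fun x => unitv (ptY x - seg (a 0) (v 0) (x 0)))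
      (fun x => unitv (seg (a 1) (v 1) (x 1) - ptY x))
      (fun x => unitv (ptY x - seg (a 2) (v 2) (x 2))) x

/-- Near every (triple or higher) multiple point of the diagram, the strands of the long
knot `f` are straight segments parallel to the plane `N^⊥`. -/
def StraightNearMultipleK (f : ℝ → E3) : Prop :=
  ∀ t u v : ℝ, t ≠ u → u ≠ v → t ≠ v →
    pr12 (f t) = pr12 (f u) → pr12 (f u) = pr12 (f v) →
    ∃ δ > (0 : ℝ), ∃ w : E3, w 2 = 0 ∧ ∀ s : ℝ, |s - t| < δ → f s = f t + (s - t) • w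

/-- Near every (triple or higher) multiple point of the diagram, the strands of the long
link `f` are straight segments parallel to the plane `N^⊥`. -/
def StraightNearMultipleL (f : Fin 3 → ℝ → E3) : Prop :=
  ∀ (i j k : Fin 3) (t u v : ℝ), (i, t) ≠ (j, u) → (j, u) ≠ (k, v) → (i, t) ≠ (k, v) →
    pr12 (f i t) = pr12 (f j u) → pr12 (f j u) = pr12 (f k v) →
    ∃ δ > (0 : ℝ), ∃ w : E3, w 2 = 0 ∧ ∀ s : ℝ, |s - t| < δ → f i s = f i t + (s - t) • w

/-! ### Closed 2-component links and the linking number -/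

/-- A smooth loop in `ℝ³`, parametrized with period 1 and injective on a period. -/
def IsLoop (f : ℝ → E3) : Prop :=
  ContDiff ℝ (⊤ : ℕ∞) f ∧ (∀ t, f (t + 1) = f t) ∧ (∀ t, deriv f t ≠ 0) ∧
    ∀ s t : ℝ, f s = f t → ∃ n : ℤ, t - s = n

/-- The diagram of the 2-component link `(f 0, f 1)` has only transverse double points. -/
def OnlyDouble2 (f : Fin 2 → ℝ → E3) : Prop :=
  (∀ i j s t, f i s ≠ f j t → pr12 (f i s) = pr12 (f j t) →
      cross2 (deriv (f i) s) (deriv (f j) t) ≠ 0) ∧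
  ∀ i j k s t u, f i s ≠ f j t → f j t ≠ f k u → f i s ≠ f k u →
    pr12 (f i s) = pr12 (f j t) → pr12 (f j t) = pr12 (f k u) → False

/-- The crossings of the diagram at which `f₂` passes over `f₁` (one parameter period). -/
def Crossing12 (f₁ f₂ : ℝ → E3) : Set (ℝ × ℝ) :=
  {p | p.1 ∈ Ico (0 : ℝ) 1 ∧ p.2 ∈ Ico (0 : ℝ) 1 ∧
    pr12 (f₁ p.1) = pr12 (f₂ p.2) ∧ pr3 (f₁ p.1) < pr3 (f₂ p.2)}

/-- The sum of the signs of the crossings of the diagram at which `f₂` passes over `f₁`;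
this is the linking number `lk(f₁, f₂)`, i.e. the mapping degree of
`h : S¹ × S¹ → S²`. -/
def lkSum (f₁ f₂ : ℝ → E3) : ℝ :=
  ∑ᶠ p ∈ Crossing12 f₁ f₂, Real.sign (cross2 (deriv f₂ p.2) (deriv f₁ p.1))

/-- The fundamental domain `[0,1) × [0,1)` of `S¹ × S¹`. -/
def sq01 : Set E2 := {x | x 0 ∈ Ico (0 : ℝ) 1 ∧ x 1 ∈ Ico (0 : ℝ) 1}

/-- `∫_{S¹×S¹} h*η` for `h(x₁,x₂) = unit (f₂(x₂) - f₁(x₁))`. -/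
def lkIntegral (f₁ f₂ : ℝ → E3) (g : E3 → ℝ) : ℝ :=
  ∫ x in sq01, form2 g (fun x : E2 => unitv (f₂ (x 1) - f₁ (x 0))) x 0 1

/-!
The pullback of `η` under the direction of a chord decays like the inverse square of the length of
the chord. Where all parameters lie on the ends of the link, the ends are conical, so the direction
maps are invariant under dilations, their differentials share the Euler vector field in their
kernels, and the integrand vanishes. On the support of the integrand some parameter `s` is therefore
bounded, and compactness together with the disjointness of the strands bounds the distance between
points `s`, `t` of different strands below by a multiple of `1 + max |s| |t|`. The remaining decay
has an integrable majorant: a product of the weights `(1 + |s|) ^ (-5/4)`, times, for the tripod, an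
integrable function of the distance from the free vertex to the nearest foot.
-/

/-! ### The derivative of the normalization map -/

lemma hasFDerivAt_normalize {F : Type*} [NormedAddCommGroup F] [InnerProductSpace ℝ F] {v : F}
    (hv : v ≠ 0) :
    HasFDerivAt NormedSpace.normalize (‖v‖⁻¹ • (ℝ ∙ v)ᗮ.starProjection) v := by
  have hnorm : ‖v‖ ≠ 0 := norm_ne_zero_iff.mpr hv
  have hsqrt := (hasStrictFDerivAt_norm_sq v).hasFDerivAt.sqrt (by positivity)
  simp only [Real.sqrt_sq (norm_nonneg _)] at hsqrt
  refine (((hasDerivAt_inv hnorm).comp_hasFDerivAt v hsqrt).smul (hasFDerivAt_id v)).congr_fderiv ?_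
  ext w
  simp only [Function.comp_apply, one_div, mul_inv_rev, smul_smul, neg_mul, neg_smul, id_eq,
    add_apply, smul_apply, ContinuousLinearMap.id_apply, ContinuousLinearMap.smulRight_apply,
    neg_apply, coe_innerSL_apply, nsmul_eq_mul, Nat.cast_ofNat, smul_eq_mul,
    Submodule.starProjection_orthogonal, sub_eq_add_neg, smul_add, smul_neg,
    Submodule.starProjection_singleton, Real.ringHom_apply, add_right_inj, neg_inj]
  congr 1
  field_simp

section PullbackForm

variable {n : ℕ} {g : E3 → ℝ} {v : EuclideanSpace ℝ (Fin n) → E3}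
  {v' : EuclideanSpace ℝ (Fin n) →L[ℝ] E3} {x : EuclideanSpace ℝ (Fin n)}

lemma fderiv_unitv_comp (hv : HasFDerivAt v v' x) (hx : v x ≠ 0) :
    fderiv ℝ (fun y => unitv (v y)) x =
      (‖v x‖⁻¹ • (ℝ ∙ v x)ᗮ.starProjection).comp v' :=
  ((hasFDerivAt_normalize hx).comp x hv).fderiv

lemma fderiv_unitv_comp_apply_eq_zero (hv : HasFDerivAt v v' x) (hx : v x ≠ 0)
    {w : EuclideanSpace ℝ (Fin n)} (hw : v' w = v x) :
    fderiv ℝ (fun y => unitv (v y)) x w = 0 := by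
  have hproj : (ℝ ∙ v x)ᗮ.starProjection (v x) = 0 :=
    Submodule.starProjection_orthogonal_apply_eq_zero (Submodule.mem_span_singleton_self _)
  simp [fderiv_unitv_comp hv hx, hw, hproj]

lemma norm_pdv_unitv_comp_le (hv : HasFDerivAt v v' x) (hx : v x ≠ 0) (i : Fin n) :
    ‖pdv (fun y => unitv (v y)) i x‖ ≤ ‖v'‖ / ‖v x‖ := by
  rw [pdv, fderiv_unitv_comp hv hx, div_eq_inv_mul, ContinuousLinearMap.comp_apply, smul_apply,
    norm_smul, norm_inv, norm_norm]
  gcongr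
  calc _ ≤ ‖v' (EuclideanSpace.single i 1)‖ := Submodule.norm_starProjection_apply_le _ _
    _ ≤ ‖v'‖ := by simpa using v'.le_opNorm (EuclideanSpace.single i 1)

/-! ### Estimates and vanishing for pulled-back forms -/

lemma abs_det3_le (p v w : E3) : |det3 p v w| ≤ ‖p‖ * ‖v‖ * ‖w‖ := by
  refine abs_le_of_sq_le_sq ?_ (by positivity)
  have hp := Finset.sum_mul_sq_le_sq_mul_sq Finset.univ p
    ![v 1 * w 2 - v 2 * w 1, v 2 * w 0 - v 0 * w 2, v 0 * w 1 - v 1 * w 0]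
  simp only [Fin.sum_univ_three, Matrix.cons_val] at hp
  simp only [mul_pow, EuclideanSpace.real_norm_sq_eq, Fin.sum_univ_three]
  calc det3 p v w ^ 2 ≤ (p 0 ^ 2 + p 1 ^ 2 + p 2 ^ 2) * ((v 1 * w 2 - v 2 * w 1) ^ 2 +
        (v 2 * w 0 - v 0 * w 2) ^ 2 + (v 0 * w 1 - v 1 * w 0) ^ 2) := by
        rw [det3]
        linarith
    _ ≤ (p 0 ^ 2 + p 1 ^ 2 + p 2 ^ 2) *
        ((v 0 ^ 2 + v 1 ^ 2 + v 2 ^ 2) * (w 0 ^ 2 + w 1 ^ 2 + w 2 ^ 2)) := by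
        gcongr
        -- Lagrange's identity: the difference is the square of the inner product of `v` and `w`.
        linarith [sq_nonneg (v 0 * w 0 + v 1 * w 1 + v 2 * w 2)]
    _ = _ := (mul_assoc _ _ _).symm

lemma abs_form2_unitv_comp_le {G : ℝ} (hg : ∀ u : E3, ‖u‖ = 1 → |g u| ≤ G)
    (hv : HasFDerivAt v v' x) (hx : v x ≠ 0) (i j : Fin n) :
    |form2 g (fun y => unitv (v y)) x i j| ≤ G * (‖v'‖ / ‖v x‖) ^ 2 := by
  have hunit : ‖unitv (v x)‖ = 1 := NormedSpace.norm_normalize_eq_one_iff.mpr hx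
  have hG : 0 ≤ G := (abs_nonneg _).trans (hg _ hunit)
  have hpdv := norm_pdv_unitv_comp_le hv hx
  rw [form2, abs_mul, sq]
  gcongr
  · exact hg _ hunit
  · refine (abs_det3_le _ _ _).trans ?_
    rw [hunit, one_mul]
    gcongr
    exacts [hpdv i, hpdv j]

lemma form2_eq_zero_of_pdv_eq_smul {h : EuclideanSpace ℝ (Fin n) → E3} {u : E3} {c : Fin n → ℝ}
    (hpdv : ∀ i, pdv h i x = c i • u) (i j : Fin n) : form2 g h x i j = 0 := by
  simp only [form2, det3, hpdv, PiLp.smul_apply, smul_eq_mul]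
  ring

end PullbackForm

lemma abs_sign_cast {ι : Type*} [Fintype ι] [DecidableEq ι] (σ : Equiv.Perm ι) :
    |((Equiv.Perm.sign σ : ℤ) : ℝ)| = 1 := by
  rcases Int.units_eq_one_or (Equiv.Perm.sign σ) with h | h <;> simp [h]

lemma abs_wedge22_le {g : E3 → ℝ} {h k : E4 → E3} {x : E4} {A B : ℝ}
    (hA : ∀ i j, |form2 g h x i j| ≤ A) (hB : ∀ i j, |form2 g k x i j| ≤ B) :
    |wedge22 g h k x| ≤ 6 * (A * B) := by
  have hA0 : 0 ≤ A := (abs_nonneg _).trans (hA 0 0)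
  rw [wedge22, abs_mul]
  calc _ ≤ |(1 / 4 : ℝ)| * ∑ _σ : Equiv.Perm (Fin 4), A * B := by
        gcongr
        refine (Finset.abs_sum_le_sum_abs _ _).trans (Finset.sum_le_sum fun σ _ => ?_)
        rw [abs_mul, abs_mul, abs_sign_cast, one_mul]
        gcongr
        exacts [hA _ _, hB _ _]
    _ = 6 * (A * B) := by
        norm_num [Fintype.card_perm, Nat.factorial]
        ring

lemma abs_wedge222_le {g : E3 → ℝ} {h k l : E6 → E3} {x : E6} {A B C : ℝ}
    (hA : ∀ i j, |form2 g h x i j| ≤ A) (hB : ∀ i j, |form2 g k x i j| ≤ B)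
    (hC : ∀ i j, |form2 g l x i j| ≤ C) :
    |wedge222 g h k l x| ≤ 90 * (A * B * C) := by
  have hA0 : 0 ≤ A := (abs_nonneg _).trans (hA 0 0)
  have hB0 : 0 ≤ B := (abs_nonneg _).trans (hB 0 0)
  rw [wedge222, abs_mul]
  calc _ ≤ |(1 / 8 : ℝ)| * ∑ _σ : Equiv.Perm (Fin 6), A * B * C := by
        gcongr
        refine (Finset.abs_sum_le_sum_abs _ _).trans (Finset.sum_le_sum fun σ _ => ?_)
        rw [abs_mul, abs_mul, abs_mul, abs_sign_cast, one_mul]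
        gcongr
        exacts [hA _ _, hB _ _, hC _ _]
    _ = 90 * (A * B * C) := by
        norm_num [Fintype.card_perm, Nat.factorial]
        ring

/-- The product of three bilinear forms, as a multilinear form in six arguments; antisymmetrizing
it gives the wedge product of three 2-forms. -/
def bilinProd₃ {V : Type*} [AddCommGroup V] [Module ℝ V] (A B C : V →ₗ[ℝ] V →ₗ[ℝ] ℝ) :
    MultilinearMap ℝ (fun _ : Fin 6 => V) ℝ where
  toFun u := A (u 0) (u 1) * B (u 2) (u 3) * C (u 4) (u 5)
  map_update_add' {inst} u i x y := by
    obtain rfl : inst = instDecidableEqFin 6 := Subsingleton.elim _ _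
    fin_cases i <;> simp [Fin.ext_iff] <;> ring
  map_update_smul' {inst} u i c x := by
    obtain rfl : inst = instDecidableEqFin 6 := Subsingleton.elim _ _
    fin_cases i <;> simp [Fin.ext_iff] <;> ring

/-- The value `g p · det3 p` of the 2-form `g · (area form)` at `p`, extended bilinearly to all of
`ℝ³`. -/
def areaForm (g : E3 → ℝ) (p : E3) : E3 →ₗ[ℝ] E3 →ₗ[ℝ] ℝ :=
  LinearMap.mk₂ ℝ (fun v w => g p * det3 p v w)
    (by intros; simp [det3]; ring) (by intros; simp [det3]; ring)
    (by intros; simp [det3]; ring) (by intros; simp [det3]; ring)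

lemma wedge222_eq_alternatization (g : E3 → ℝ) (h : Fin 3 → E6 → E3) (x : E6) :
    wedge222 g (h 0) (h 1) (h 2) x = 1 / 8 * MultilinearMap.alternatization
      (bilinProd₃
        ((areaForm g (h 0 x)).compl₁₂ (LinearMap.proj 0) (LinearMap.proj 0))
        ((areaForm g (h 1 x)).compl₁₂ (LinearMap.proj 1) (LinearMap.proj 1))
        ((areaForm g (h 2 x)).compl₁₂ (LinearMap.proj 2) (LinearMap.proj 2)))
      (fun i (k : Fin 3) => pdv (h k) i x) := by
  rw [wedge222, MultilinearMap.alternatization_apply]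
  congr 1
  refine Finset.sum_congr rfl fun σ _ => ?_
  rw [Units.smul_def, zsmul_eq_mul, mul_assoc, mul_assoc, ← mul_assoc (form2 _ _ _ _ _)]
  rfl

lemma sum_smul_pdv {n : ℕ} (h : EuclideanSpace ℝ (Fin n) → E3) (x w : EuclideanSpace ℝ (Fin n)) :
    ∑ i, w i • pdv h i x = fderiv ℝ h x w := by
  conv_rhs => rw [← (EuclideanSpace.basisFun (Fin n) ℝ).sum_repr w]
  simp [pdv]

lemma wedge222_eq_zero_of_fderiv_apply_eq_zero (g : E3 → ℝ) (h : Fin 3 → E6 → E3) {x w : E6}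
    (hw : w ≠ 0) (hker : ∀ k, fderiv ℝ (h k) x w = 0) :
    wedge222 g (h 0) (h 1) (h 2) x = 0 := by
  have hdep : ¬ LinearIndependent ℝ (fun i (k : Fin 3) => pdv (h k) i x) := by
    rw [Fintype.not_linearIndependent_iff]
    refine ⟨w, funext fun k => ?_, ?_⟩
    · simp [sum_smul_pdv, hker]
    · by_contra! hzero
      exact hw (PiLp.ext hzero)
  rw [wedge222_eq_alternatization, AlternatingMap.map_linearDependent _ _ hdep, mul_zero]

lemma measurable_form2 {n : ℕ} {g : E3 → ℝ} (hg : Measurable g)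
    {h : EuclideanSpace ℝ (Fin n) → E3} (hh : Measurable h) (i j : Fin n) :
    Measurable (fun x => form2 g h x i j) := by
  have hpdv (k : Fin n) : Measurable (pdv h k) := measurable_fderiv_apply_const ℝ h _
  have := hpdv i
  have := hpdv j
  unfold form2 det3
  fun_prop

lemma measurable_wedge22 {g : E3 → ℝ} (hg : Measurable g) {h k : E4 → E3} (hh : Measurable h)
    (hk : Measurable k) : Measurable (wedge22 g h k) := by
  have := measurable_form2 hg hh
  have := measurable_form2 hg hk
  unfold wedge22
  fun_prop

lemma measurable_wedge222 {g : E3 → ℝ} (hg : Measurable g) {h k l : E6 → E3} (hh : Measurable h)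
    (hk : Measurable k) (hl : Measurable l) : Measurable (wedge222 g h k l) := by
  have := measurable_form2 hg hh
  have := measurable_form2 hg hk
  have := measurable_form2 hg hl
  unfold wedge222
  fun_prop
/-! ### Lower bounds by compactness -/

section Coercive

variable {V : Type*} [NormedAddCommGroup V] [ProperSpace V] {F : V → ℝ}

lemma exists_mul_norm_le_of_homogeneous [NormedSpace ℝ V] (hF : Continuous F)
    (hpos : ∀ v ≠ 0, 0 < F v) (hhom : ∀ r v, 0 ≤ r → F (r • v) = r * F v) :
    ∃ c > 0, ∀ v, c * ‖v‖ ≤ F v := by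
  obtain ⟨c, hc, hmin⟩ := (isCompact_sphere (0 : V) 1).exists_forall_le' hF.continuousOn (a := 0)
    fun v hv => hpos v (ne_zero_of_mem_unit_sphere ⟨v, hv⟩)
  refine ⟨c, hc, fun v => ?_⟩
  have hv : F v = ‖v‖ * F (NormedSpace.normalize v) := by
    rw [← hhom _ _ (norm_nonneg v), NormedSpace.norm_smul_normalize]
  rw [hv, mul_comm]
  rcases eq_or_ne v 0 with rfl | hv0
  · simp
  · gcongr
    exact hmin _ (by simpa using hv0)

lemma exists_mul_one_add_norm_le (hF : Continuous F) (hpos : ∀ v, 0 < F v) {c A : ℝ} (hc : 0 < c)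
    (hgrowth : ∀ v, c * ‖v‖ - A ≤ F v) : ∃ κ > 0, ∀ v, κ * (1 + ‖v‖) ≤ F v := by
  have hone (v : V) : 0 < 1 + ‖v‖ := by positivity
  obtain ⟨δ, hδ, hmin⟩ := (isCompact_closedBall (0 : V) (1 + 2 * A / c)).exists_forall_le'
    (f := fun v => F v / (1 + ‖v‖)) (a := 0)
    (hF.div (by fun_prop) fun v => (hone v).ne').continuousOn fun v _ => div_pos (hpos v) (hone v)
  refine ⟨min δ (c / 2), by positivity, fun v => ?_⟩
  rcases le_or_gt ‖v‖ (1 + 2 * A / c) with hv | hv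
  · rw [← le_div_iff₀ (hone v)]
    exact (min_le_left _ _).trans (hmin v (by simpa using hv))
  · calc min δ (c / 2) * (1 + ‖v‖) ≤ c / 2 * (1 + ‖v‖) := by gcongr; exact min_le_right _ _
      _ ≤ c * ‖v‖ - A := by
          have : c * (1 + 2 * A / c) ≤ c * ‖v‖ := by gcongr
          have : c * (1 + 2 * A / c) = c + 2 * A := by field_simp
          linarith
      _ ≤ F v := hgrowth v

end Coercive

/-! ### Conical curves and links -/

section Conical

variable {E : Type*} [NormedAddCommGroup E] [NormedSpace ℝ E]

/-- A `C¹` curve which outside `[-1, 1]` runs linearly along two rays issuing from the origin: there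
it commutes with dilations of ratio at least `1`. -/
structure IsConicalCurve (γ : ℝ → E) : Prop where
  contDiff : ContDiff ℝ 1 γ
  map_mul : ∀ r s : ℝ, 1 ≤ r → 1 ≤ |s| → γ (r * s) = r • γ s

/-- The piecewise linear curve that extends the two ends of `γ` up to the origin. -/
def coneCurve (γ : ℝ → E) (s : ℝ) : E := max s 0 • γ 1 + max (-s) 0 • γ (-1)

lemma continuous_coneCurve (γ : ℝ → E) : Continuous (coneCurve γ) := by
  unfold coneCurve
  fun_prop

lemma coneCurve_mul (γ : ℝ → E) {r : ℝ} (hr : 0 ≤ r) (s : ℝ) :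
    coneCurve γ (r * s) = r • coneCurve γ s := by
  simp only [coneCurve, smul_add, smul_smul, mul_max_of_nonneg _ _ hr, mul_zero, mul_neg]

lemma coneCurve_zero (γ : ℝ → E) : coneCurve γ 0 = 0 := by simp [coneCurve]

namespace IsConicalCurve

variable {γ : ℝ → E} (hγ : IsConicalCurve γ)
include hγ

lemma eq_coneCurve {s : ℝ} (hs : 1 ≤ |s|) : γ s = coneCurve γ s := by
  rcases le_abs.mp hs with h | h
  · have := hγ.map_mul s 1 h (by simp)
    rw [mul_one] at this
    rw [this, coneCurve, max_eq_left (by linarith), max_eq_right (by linarith), zero_smul, add_zero]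
  · have := hγ.map_mul (-s) (-1) h (by simp)
    rw [neg_mul_neg, mul_one] at this
    rw [this, coneCurve, max_eq_right (by linarith), max_eq_left (by linarith), zero_smul, zero_add]

lemma apply_mul_eq_smul_coneCurve {r s : ℝ} (hs : s ≠ 0) (hr : |s|⁻¹ ≤ r) :
    γ (r * s) = r • coneCurve γ s := by
  have hs0 : 0 < |s| := abs_pos.mpr hs
  have hr0 : 0 ≤ r := (inv_nonneg.mpr hs0.le).trans hr
  rw [hγ.eq_coneCurve, coneCurve_mul γ hr0]
  rwa [abs_mul, abs_of_nonneg hr0, ← inv_le_iff_one_le_mul₀ hs0]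

lemma exists_norm_sub_coneCurve_le : ∃ A, ∀ s, ‖γ s - coneCurve γ s‖ ≤ A := by
  obtain ⟨A, hA⟩ := (isCompact_Icc (a := (-1 : ℝ)) (b := 1)).exists_bound_of_continuousOn
    (hγ.contDiff.continuous.sub (continuous_coneCurve γ)).continuousOn
  refine ⟨A, fun s => ?_⟩
  rcases le_total |s| 1 with hs | hs
  · exact hA s (abs_le.mp hs)
  · rw [hγ.eq_coneCurve hs, sub_self, norm_zero]
    exact (norm_nonneg _).trans (hA 0 (by simp))

lemma differentiable : Differentiable ℝ γ := hγ.contDiff.differentiable one_ne_zero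

lemma smul_deriv {s : ℝ} (hs : 1 ≤ |s|) : s • deriv γ s = γ s := by
  have hchain : HasDerivAt (fun r : ℝ => γ (r * s)) (s • deriv γ s) 1 := by
    have hmul : HasDerivAt (fun r : ℝ => r * s) s 1 := hasDerivAt_mul_const s
    have hderiv := (hγ.differentiable (1 * s)).hasDerivAt
    rw [one_mul] at hderiv
    exact HasDerivAt.scomp_of_eq 1 hderiv hmul (one_mul s).symm
  have hlinear : HasDerivAt (fun r : ℝ => r • γ s) (γ s) 1 := by
    simpa using (hasDerivAt_id (1 : ℝ)).smul_const (γ s)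
  have hlinear' : HasDerivWithinAt (fun r : ℝ => γ (r * s)) (γ s) (Ici 1) 1 :=
    hlinear.hasDerivWithinAt.congr (fun r hr => hγ.map_mul r s hr hs) (hγ.map_mul 1 s le_rfl hs)
  exact (uniqueDiffWithinAt_Ici 1).eq_deriv _ hchain.hasDerivWithinAt hlinear'

lemma exists_norm_deriv_le : ∃ M, ∀ s, ‖deriv γ s‖ ≤ M := by
  obtain ⟨M, hM⟩ := (isCompact_Icc (a := (-1 : ℝ)) (b := 1)).exists_bound_of_continuousOn
    (hγ.contDiff.continuous_deriv le_rfl).continuousOn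
  refine ⟨M, fun s => ?_⟩
  rcases le_total |s| 1 with hs | hs
  · exact hM s (abs_le.mp hs)
  obtain ⟨u, hu, hsu⟩ : ∃ u : ℝ, |u| = 1 ∧ |s| * u = s := by
    have hs0 : |s| ≠ 0 := by linarith
    exact ⟨s / |s|, by rw [abs_div, abs_abs, div_self hs0], mul_div_cancel₀ s hs0⟩
  suffices deriv γ s = deriv γ u from this ▸ hM u (abs_le.mp hu.le)
  have hs0 : s ≠ 0 := by
    rintro rfl
    norm_num at hs
  refine smul_right_injective E hs0 ?_
  calc s • deriv γ s = γ (|s| * u) := by rw [hγ.smul_deriv hs, hsu]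
    _ = |s| • u • deriv γ u := by rw [hγ.map_mul _ _ hs hu.ge, hγ.smul_deriv hu.ge]
    _ = s • deriv γ u := by rw [smul_smul, hsu]

end IsConicalCurve

/-- A family of conical curves that together embed `ι × ℝ` injectively. -/
structure IsConicalLink {ι : Type*} (f : ι → ℝ → E) : Prop where
  conical : ∀ i, IsConicalCurve (f i)
  injective : Function.Injective (Function.uncurry f)

namespace IsConicalLink

variable {ι : Type*} {f : ι → ℝ → E} (hf : IsConicalLink f)
include hf

lemma apply_ne {i j : ι} (hij : i ≠ j) (s t : ℝ) : f i s ≠ f j t := fun h =>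
  hij (congrArg Prod.fst (hf.injective (a₁ := (i, s)) (a₂ := (j, t)) h))

lemma coneCurve_ne_zero (i : ι) {s : ℝ} (hs : s ≠ 0) : coneCurve (f i) s ≠ 0 := by
  intro h
  have hzero {r : ℝ} (hr : |s|⁻¹ ≤ r) : f i (r * s) = 0 := by
    rw [(hf.conical i).apply_mul_eq_smul_coneCurve hs hr, h, smul_zero]
  have heq : f i (|s|⁻¹ * s) = f i ((|s|⁻¹ + 1) * s) := by
    rw [hzero le_rfl, hzero (by linarith)]
  have := congrArg Prod.snd (hf.injective (a₁ := (i, _)) (a₂ := (i, _)) heq)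
  exact hs (by simpa [add_mul] using this)

lemma coneCurve_ne {i j : ι} (hij : i ≠ j) {s t : ℝ} (hst : (s, t) ≠ 0) :
    coneCurve (f i) s ≠ coneCurve (f j) t := by
  intro h
  rcases eq_or_ne s 0 with rfl | hs
  · have ht : t ≠ 0 := by rintro rfl; exact hst rfl
    exact hf.coneCurve_ne_zero j ht (by rw [← h, coneCurve_zero])
  rcases eq_or_ne t 0 with rfl | ht
  · exact hf.coneCurve_ne_zero i hs (by rw [h, coneCurve_zero])
  apply hf.apply_ne hij (max |s|⁻¹ |t|⁻¹ * s) (max |s|⁻¹ |t|⁻¹ * t)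
  rw [(hf.conical i).apply_mul_eq_smul_coneCurve hs (le_max_left _ _),
    (hf.conical j).apply_mul_eq_smul_coneCurve ht (le_max_right _ _), h]

lemma exists_separation_pair {i j : ι} (hij : i ≠ j) :
    ∃ κ > 0, ∀ s t, κ * (1 + ‖(s, t)‖) ≤ ‖f i s - f j t‖ := by
  have hcont (k : ι) : Continuous (f k) := (hf.conical k).contDiff.continuous
  have hcone (k : ι) : Continuous (coneCurve (f k)) := continuous_coneCurve _
  obtain ⟨c, hc, hgrowth⟩ : ∃ c > 0, ∀ p : ℝ × ℝ,
      c * ‖p‖ ≤ ‖coneCurve (f i) p.1 - coneCurve (f j) p.2‖ := by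
    refine exists_mul_norm_le_of_homogeneous (by fun_prop)
      (fun p hp => norm_sub_pos_iff.mpr (hf.coneCurve_ne hij hp)) fun r p hr => ?_
    rw [Prod.smul_fst, Prod.smul_snd, smul_eq_mul, smul_eq_mul, coneCurve_mul _ hr,
      coneCurve_mul _ hr, ← smul_sub, norm_smul, Real.norm_of_nonneg hr]
  obtain ⟨A, hA⟩ := (hf.conical i).exists_norm_sub_coneCurve_le
  obtain ⟨B, hB⟩ := (hf.conical j).exists_norm_sub_coneCurve_le
  obtain ⟨κ, hκ, hsep⟩ := exists_mul_one_add_norm_le (F := fun p : ℝ × ℝ => ‖f i p.1 - f j p.2‖)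
    (by fun_prop) (fun p => norm_sub_pos_iff.mpr (hf.apply_ne hij _ _)) hc (A := A + B) fun p => by
      have hsum : coneCurve (f i) p.1 - coneCurve (f j) p.2 =
          (f i p.1 - f j p.2) - (f i p.1 - coneCurve (f i) p.1) +
            (f j p.2 - coneCurve (f j) p.2) := by abel
      have := hgrowth p
      rw [hsum] at this
      linarith [norm_add_le ((f i p.1 - f j p.2) - (f i p.1 - coneCurve (f i) p.1))
        (f j p.2 - coneCurve (f j) p.2), norm_sub_le (f i p.1 - f j p.2)
        (f i p.1 - coneCurve (f i) p.1), hA p.1, hB p.2]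
  exact ⟨κ, hκ, fun s t => hsep (s, t)⟩

lemma exists_separation [Finite ι] :
    ∃ κ > 0, ∀ i j, i ≠ j → ∀ s t, κ * (1 + ‖(s, t)‖) ≤ ‖f i s - f j t‖ := by
  have hpair (i j : ι) (hij : i ≠ j) :
      ∀ᶠ κ in 𝓝[>] (0 : ℝ), ∀ s t, κ * (1 + ‖(s, t)‖) ≤ ‖f i s - f j t‖ := by
    obtain ⟨κ₀, hκ₀, hsep⟩ := hf.exists_separation_pair hij
    filter_upwards [Ioc_mem_nhdsGT hκ₀] with κ hκ s t
    exact le_trans (by gcongr; exact hκ.2) (hsep s t)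
  have hall : ∀ᶠ κ in 𝓝[>] (0 : ℝ), ∀ i j, i ≠ j → ∀ s t, κ * (1 + ‖(s, t)‖) ≤ ‖f i s - f j t‖ := by
    simpa only [eventually_all] using hpair
  exact (eventually_mem_nhdsWithin.and hall).exists

end IsConicalLink

end Conical

lemma IsLongLink3.isConicalLink {f : Fin 3 → ℝ → E3} (hf : IsLongLink3 f) : IsConicalLink f := by
  obtain ⟨hsmooth, hinj, -, hends⟩ := hf
  refine ⟨fun i => ⟨(hsmooth i).of_le (by exact_mod_cast le_top), fun r s hr hs => ?_⟩, ?_⟩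
  · have hrs : |r * s| = r * |s| := by rw [abs_mul, abs_of_pos (by linarith)]
    rw [hends i s hs, hends i (r * s) (hrs ▸ one_le_mul_of_one_le_of_one_le hr hs), hrs]
    ext k
    fin_cases k <;> simp [mk3]
    ring
  · rintro ⟨i, s⟩ ⟨j, t⟩ h
    exact Prod.ext_iff.mpr (hinj i j s t h)
/-! ### Integrable weights -/

/-- The weight `(1 + |s|) ^ (-5/4)` on the line. The exponent lies between `1`, needed for
integrability, and `2`, the decay of the integrands: three quarters of a power are left over for the
free point of a tripod. -/
def lineWeight (s : ℝ) : ℝ := (1 + |s|) ^ (-(5 / 4) : ℝ)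

/-- The weight `r ^ (-2) * (1 + r) ^ (-3/2)` on `ℝ³`, as a function of the distance `r` to its
centre. -/
def radialWeight (r : ℝ) : ℝ := (r ^ 2)⁻¹ * (1 + r) ^ (-(3 / 2) : ℝ)

lemma lineWeight_pos (s : ℝ) : 0 < lineWeight s := by
  unfold lineWeight
  positivity

lemma radialWeight_nonneg {r : ℝ} (hr : 0 ≤ r) : 0 ≤ radialWeight r := by
  unfold radialWeight
  positivity

lemma one_le_four_mul_lineWeight {s : ℝ} (hs : |s| ≤ 1) : 1 ≤ 4 * lineWeight s := by
  rw [lineWeight, Real.rpow_neg (by positivity), ← div_eq_mul_inv, one_le_div (by positivity)]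
  calc (1 + |s|) ^ (5 / 4 : ℝ) ≤ 2 ^ (5 / 4 : ℝ) := by gcongr; linarith
    _ ≤ 2 ^ (2 : ℝ) := by gcongr <;> norm_num
    _ = 4 := by norm_num

lemma inv_sq_le_rpow_mul_lineWeight {P a s : ℝ} (ha : 0 ≤ a) (haP : 1 + a ≤ P)
    (hsP : 1 + |s| ≤ P) : (P ^ 2)⁻¹ ≤ (1 + a) ^ (-(3 / 4) : ℝ) * lineWeight s := by
  have hP : 0 < P := by linarith
  rw [lineWeight, Real.rpow_neg (by positivity), Real.rpow_neg (by positivity), ← mul_inv]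
  gcongr
  calc (1 + a) ^ (3 / 4 : ℝ) * (1 + |s|) ^ (5 / 4 : ℝ) ≤ P ^ (3 / 4 : ℝ) * P ^ (5 / 4 : ℝ) := by
        gcongr
    _ = P ^ 2 := by
        rw [← Real.rpow_add hP, ← Real.rpow_natCast]
        norm_num

lemma inv_sq_le_lineWeight {P s : ℝ} (hsP : 1 + |s| ≤ P) : (P ^ 2)⁻¹ ≤ lineWeight s := by
  simpa using inv_sq_le_rpow_mul_lineWeight le_rfl (by linarith [abs_nonneg s]) hsP

lemma inv_sq_le_four_mul_lineWeight_mul {P s t : ℝ} (hs : 1 + |s| ≤ P) (ht : 1 + |t| ≤ P)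
    (hin : |s| ≤ 1 ∨ |t| ≤ 1) : (P ^ 2)⁻¹ ≤ 4 * (lineWeight s * lineWeight t) := by
  rcases hin with h | h
  · calc (P ^ 2)⁻¹ ≤ lineWeight t := inv_sq_le_lineWeight ht
      _ ≤ lineWeight t * (4 * lineWeight s) :=
        le_mul_of_one_le_right (lineWeight_pos t).le (one_le_four_mul_lineWeight h)
      _ = 4 * (lineWeight s * lineWeight t) := by ring
  · calc (P ^ 2)⁻¹ ≤ lineWeight s := inv_sq_le_lineWeight hs
      _ ≤ lineWeight s * (4 * lineWeight t) :=
        le_mul_of_one_le_right (lineWeight_pos s).le (one_le_four_mul_lineWeight h)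
      _ = 4 * (lineWeight s * lineWeight t) := by ring

lemma inv_sq_mul_inv_sq_le {P Q a x y z : ℝ} (ha : 0 ≤ a) (haP : 1 + a ≤ P) (haQ : 1 + a ≤ Q)
    (hxP : 1 + |x| ≤ P) (hyQ : 1 + |y| ≤ Q) (hz : |z| ≤ 1) :
    (P ^ 2)⁻¹ * (Q ^ 2)⁻¹ ≤
      4 * (lineWeight x * lineWeight y * lineWeight z * (1 + a) ^ (-(3 / 2) : ℝ)) := by
  have hx := lineWeight_pos x
  have hy := lineWeight_pos y
  have hP := inv_sq_le_rpow_mul_lineWeight ha haP hxP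
  have hQ := inv_sq_le_rpow_mul_lineWeight ha haQ hyQ
  calc (P ^ 2)⁻¹ * (Q ^ 2)⁻¹ ≤ ((1 + a) ^ (-(3 / 4) : ℝ) * lineWeight x) *
          ((1 + a) ^ (-(3 / 4) : ℝ) * lineWeight y) := by gcongr
    _ ≤ ((1 + a) ^ (-(3 / 4) : ℝ) * lineWeight x) * ((1 + a) ^ (-(3 / 4) : ℝ) * lineWeight y) *
          (4 * lineWeight z) :=
        le_mul_of_one_le_right (by positivity) (one_le_four_mul_lineWeight hz)
    _ = 4 * (lineWeight x * lineWeight y * lineWeight z *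
          ((1 + a) ^ (-(3 / 4) : ℝ) * (1 + a) ^ (-(3 / 4) : ℝ))) := by ring
    _ = _ := by
        rw [← Real.rpow_add (by positivity)]
        norm_num

lemma inv_sq_mul_inv_sq_le_of_exists {a P Q : ℝ} {s : Fin 3 → ℝ} (i : Fin 3) (ha : 0 ≤ a)
    (haP : 1 + a ≤ P) (haQ : 1 + a ≤ Q) (hiP : 1 + |s i| ≤ P) (hiQ : 1 + |s i| ≤ Q)
    (hP : 1 + |s (i + 1)| ≤ P) (hQ : 1 + |s (i + 2)| ≤ Q) (hin : ∃ k, |s k| ≤ 1) :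
    (P ^ 2)⁻¹ * (Q ^ 2)⁻¹ ≤ 4 * ((∏ k, lineWeight (s k)) * (1 + a) ^ (-(3 / 2) : ℝ)) := by
  have hprod : ∏ k, lineWeight (s k) =
      lineWeight (s i) * lineWeight (s (i + 1)) * lineWeight (s (i + 2)) := by
    rw [← Equiv.prod_comp (Equiv.addLeft i), Fin.prod_univ_three]
    simp
  rw [hprod]
  obtain ⟨m, hm⟩ := hin
  obtain ⟨k, rfl⟩ := (Equiv.addLeft i).surjective m
  match k with
  | 0 =>
    refine (inv_sq_mul_inv_sq_le ha haP haQ hP hQ (by simpa using hm)).trans_eq ?_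
    ring
  | 1 =>
    refine (inv_sq_mul_inv_sq_le ha haP haQ hiP hQ hm).trans_eq ?_
    simp only [Equiv.coe_addLeft]
    ring
  | 2 =>
    refine (inv_sq_mul_inv_sq_le ha haP haQ hP hiQ hm).trans_eq ?_
    simp only [Equiv.coe_addLeft]
    ring

lemma prod_inv_sq_le {κ : ℝ} (hκ : 0 < κ) {s a : Fin 3 → ℝ} (ha : ∀ i, 0 < a i)
    (hsep : ∀ i j, i ≠ j → κ * (1 + |s i|) ≤ a i + a j) (hin : ∃ i, |s i| ≤ 1) :
    ∏ i, (a i ^ 2)⁻¹ ≤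
      4 * (2 / κ + 1) ^ 4 * ((∏ i, lineWeight (s i)) * ∑ i, radialWeight (a i)) := by
  obtain ⟨i, hmin⟩ := Finite.exists_min a
  set C := 2 / κ + 1 with hC
  have hC0 : C ≠ 0 := by positivity
  -- The two larger distances dominate all parameters and the smallest distance `a i`.
  have hbig (l : Fin 3) (hl : l ≠ i) :
      1 + a i ≤ C * a l ∧ 1 + |s i| ≤ C * a l ∧ 1 + |s l| ≤ C * a l := by
    have hscale {t : ℝ} (ht : κ * t ≤ a i + a l) : t ≤ 2 / κ * a l := by
      rw [div_mul_eq_mul_div, le_div_iff₀' hκ]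
      linarith [hmin l]
    have hi := hscale (hsep i l hl.symm)
    have hl := hscale ((hsep l i hl).trans_eq (add_comm _ _))
    rw [hC, add_mul, one_mul]
    refine ⟨?_, ?_, ?_⟩ <;> linarith [hmin l, ha i, abs_nonneg (s i)]
  obtain ⟨ha₁, hi₁, hs₁⟩ := hbig (i + 1) (by simp)
  obtain ⟨ha₂, hi₂, hs₂⟩ := hbig (i + 2) (by simp)
  calc ∏ k, (a k ^ 2)⁻¹
      = C ^ 4 * ((a i ^ 2)⁻¹ * (((C * a (i + 1)) ^ 2)⁻¹ * ((C * a (i + 2)) ^ 2)⁻¹)) := by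
        rw [← Equiv.prod_comp (Equiv.addLeft i), Fin.prod_univ_three]
        simp only [Equiv.coe_addLeft, add_zero]
        field_simp
    _ ≤ C ^ 4 * ((a i ^ 2)⁻¹ *
          (4 * ((∏ k, lineWeight (s k)) * (1 + a i) ^ (-(3 / 2) : ℝ)))) := by
        gcongr C ^ 4 * (_ * ?_)
        exact inv_sq_mul_inv_sq_le_of_exists i (ha i).le ha₁ ha₂ hi₁ hi₂ hs₁ hs₂ hin
    _ = 4 * C ^ 4 * ((∏ k, lineWeight (s k)) * radialWeight (a i)) := by
        rw [radialWeight]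
        ring
    _ ≤ _ := by
        gcongr
        · exact Finset.prod_nonneg fun k _ => (lineWeight_pos _).le
        · exact Finset.single_le_sum (fun k _ => radialWeight_nonneg (ha k).le) (Finset.mem_univ i)

lemma integrable_lineWeight : Integrable lineWeight :=
  integrable_one_add_norm (r := 5 / 4) (by norm_num)

lemma integrable_radialWeight_norm : Integrable (fun v : E3 => radialWeight ‖v‖) := by
  rw [integrable_fun_norm_addHaar]
  have htail : Integrable (fun r : ℝ => (1 + ‖r‖) ^ (-(3 / 2) : ℝ)) :=
    integrable_one_add_norm (by norm_num)
  refine (htail.integrableOn (s := Ioi 0)).congr_fun (fun r (hr : 0 < r) => ?_) measurableSet_Ioi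
  simp only [finrank_euclideanSpace, Fintype.card_fin, smul_eq_mul, radialWeight,
    Real.norm_of_nonneg hr.le]
  field_simp

lemma integrable_prod_lineWeight {n : ℕ} :
    Integrable (fun x : Fin n → ℝ => ∏ i, lineWeight (x i)) :=
  Integrable.fintype_prod fun _ => integrable_lineWeight

lemma integrable_mul_comp_sub {α V : Type*} [MeasurableSpace α] {μ : Measure α} [SFinite μ]
    [AddGroup V] [MeasurableSpace V] [MeasurableAdd₂ V] [MeasurableNeg V] {ν : Measure V}
    [SFinite ν] [ν.IsAddRightInvariant] {F : α → ℝ} {K : V → ℝ} (hF : Integrable F μ)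
    (hK : Integrable K ν) {c : α → V} (hc : Measurable c) :
    Integrable (fun p : α × V => F p.1 * K (p.2 - c p.1)) (μ.prod ν) := by
  have hshear : MeasurePreserving (fun p : α × V => (p.1, p.2 - c p.1)) (μ.prod ν) (μ.prod ν) :=
    (MeasurePreserving.id μ).skew_product (g := fun a v => v - c a)
      (measurable_snd.sub (hc.comp measurable_fst))
      (ae_of_all _ fun a => (measurePreserving_sub_right ν (c a)).map_eq)
  exact hshear.integrable_comp_of_integrable (hF.mul_prod hK)

/-- The parameters `(x₁, x₂, x₃)` of the three feet of a tripod `(x₁, x₂, x₃; x₄) ∈ ℝ³ × ℝ³`. -/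
def footParams (x : E6) : Fin 3 → ℝ := fun k => x (Fin.castAdd 3 k)

lemma measurePreserving_footParams_ptY :
    MeasurePreserving (fun x : E6 => (footParams x, ptY x)) := by
  have hsplit := ((MeasurePreserving.id volume).prod (PiLp.volume_preserving_toLp (Fin 3))).comp
    ((volume_measurePreserving_sumPiEquivProdPi fun _ : Fin 3 ⊕ Fin 3 => ℝ).comp
      ((volume_measurePreserving_piCongrLeft (fun _ : Fin 3 ⊕ Fin 3 => ℝ)
        (finSumFinEquiv (m := 3) (n := 3)).symm).comp (PiLp.volume_preserving_ofLp (Fin 6))))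
  convert hsplit using 1
  · funext x
    refine Prod.ext (funext fun k => ?_) (PiLp.ext fun k => ?_) <;> fin_cases k <;> rfl
  · rfl

lemma integrable_prod_lineWeight_mul_sum_radialWeight {c : Fin 3 → ℝ → E3}
    (hc : ∀ k, Continuous (c k)) :
    Integrable fun x : E6 => (∏ k, lineWeight (footParams x k)) *
      ∑ k, radialWeight ‖ptY x - c k (footParams x k)‖ := by
  simp only [Finset.mul_sum]
  refine integrable_finsetSum _ fun k _ => ?_
  exact measurePreserving_footParams_ptY.integrable_comp_of_integrable
    (integrable_mul_comp_sub integrable_prod_lineWeight integrable_radialWeight_norm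
      (c := fun s => c k (s k)) (by fun_prop))
/-! ### Chords between two strands -/

lemma exists_abs_le_of_norm_eq_one {g : E3 → ℝ} (hg : Continuous g) :
    ∃ G ≥ 0, ∀ u : E3, ‖u‖ = 1 → |g u| ≤ G := by
  obtain ⟨G, hG⟩ := (isCompact_sphere (0 : E3) 1).exists_bound_of_continuousOn hg.continuousOn
  have hbound (u : E3) (hu : ‖u‖ = 1) : |g u| ≤ G := hG u (by simpa using hu)
  exact ⟨G, (abs_nonneg _).trans (hbound (EuclideanSpace.single 0 1) (by simp)), hbound⟩

lemma measurable_unitv : Measurable unitv := by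
  unfold unitv
  fun_prop

/-- The derivative at `x` of `x ↦ γ (x q)`. -/
def coordDeriv {n : ℕ} (γ : ℝ → E3) (q : Fin n) (x : EuclideanSpace ℝ (Fin n)) :
    EuclideanSpace ℝ (Fin n) →L[ℝ] E3 :=
  (EuclideanSpace.proj q : EuclideanSpace ℝ (Fin n) →L[ℝ] ℝ).smulRight (deriv γ (x q))

section CoordDeriv

variable {n : ℕ} {γ : ℝ → E3}

lemma coordDeriv_apply (q : Fin n) (x w : EuclideanSpace ℝ (Fin n)) :
    coordDeriv γ q x w = w q • deriv γ (x q) := rfl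

namespace IsConicalCurve

variable (hγ : IsConicalCurve γ)
include hγ

lemma hasFDerivAt_comp_coord (q : Fin n) (x : EuclideanSpace ℝ (Fin n)) :
    HasFDerivAt (fun y : EuclideanSpace ℝ (Fin n) => γ (y q)) (coordDeriv γ q x) x := by
  have hcoord : HasFDerivAt (fun y : EuclideanSpace ℝ (Fin n) => y q)
      (EuclideanSpace.proj q : EuclideanSpace ℝ (Fin n) →L[ℝ] ℝ) x := by
    simpa using (EuclideanSpace.proj q : EuclideanSpace ℝ (Fin n) →L[ℝ] ℝ).hasFDerivAt
  refine ((hγ.differentiable (x q)).hasDerivAt.hasFDerivAt.comp x hcoord).congr_fderiv ?_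
  ext w
  simp [coordDeriv_apply]

lemma coordDeriv_apply_self {q : Fin n} {x : EuclideanSpace ℝ (Fin n)} (hx : 1 ≤ |x q|) :
    coordDeriv γ q x x = γ (x q) := by
  rw [coordDeriv_apply, hγ.smul_deriv hx]

lemma exists_norm_coordDeriv_le (q : Fin n) : ∃ M, ∀ x, ‖coordDeriv γ q x‖ ≤ M := by
  obtain ⟨M, hM⟩ := hγ.exists_norm_deriv_le
  have hM0 : 0 ≤ M := (norm_nonneg _).trans (hM 0)
  refine ⟨M, fun x => ContinuousLinearMap.opNorm_le_bound _ hM0 fun w => ?_⟩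
  rw [coordDeriv_apply, norm_smul, mul_comm]
  gcongr
  exacts [hM _, PiLp.norm_apply_le w q]

end IsConicalCurve

end CoordDeriv

/-- The direction of the chord from `α (x p)` to `β (x q)`, as a function of the configuration
`x`. -/
def chordDir {n : ℕ} (α β : ℝ → E3) (p q : Fin n) (x : EuclideanSpace ℝ (Fin n)) : E3 :=
  unitv (β (x q) - α (x p))

section Chord

variable {n : ℕ} {α β : ℝ → E3} {g : E3 → ℝ} {p q : Fin n} {x : EuclideanSpace ℝ (Fin n)}

lemma measurable_chordDir (hα : Continuous α) (hβ : Continuous β) (p q : Fin n) :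
    Measurable (chordDir α β p q) :=
  measurable_unitv.comp (by fun_prop : Continuous fun x : EuclideanSpace ℝ (Fin n) =>
    β (x q) - α (x p)).measurable

lemma hasFDerivAt_chord (hα : IsConicalCurve α) (hβ : IsConicalCurve β) :
    HasFDerivAt (fun y : EuclideanSpace ℝ (Fin n) => β (y q) - α (y p))
      (coordDeriv β q x - coordDeriv α p x) x :=
  (hβ.hasFDerivAt_comp_coord q x).sub (hα.hasFDerivAt_comp_coord p x)

lemma form2_chordDir_eq_zero (hα : IsConicalCurve α) (hβ : IsConicalCurve β)
    (hne : β (x q) ≠ α (x p)) (hp : 1 ≤ |x p|) (hq : 1 ≤ |x q|) (i j : Fin n) :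
    form2 g (chordDir α β p q) x i j = 0 := by
  have hx : β (x q) - α (x p) ≠ 0 := sub_ne_zero.mpr hne
  have hv := hasFDerivAt_chord (p := p) (q := q) (x := x) hα hβ
  have hxq : x q ≠ 0 := abs_pos.mp (one_pos.trans_le hq)
  set U := ‖β (x q) - α (x p)‖⁻¹ • (ℝ ∙ (β (x q) - α (x p)))ᗮ.starProjection
  have hfderiv (w : EuclideanSpace ℝ (Fin n)) : fderiv ℝ (chordDir α β p q) x w =
      w q • U (deriv β (x q)) - w p • U (deriv α (x p)) := by
    rw [show fderiv ℝ (chordDir α β p q) x = _ from fderiv_unitv_comp hv hx,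
      ContinuousLinearMap.comp_apply, sub_apply, coordDeriv_apply, coordDeriv_apply, map_sub,
      map_smul, map_smul]
  -- Scale invariance makes the two columns `U β'` and `U α'` of the derivative proportional.
  have hEuler : fderiv ℝ (chordDir α β p q) x x = 0 :=
    fderiv_unitv_comp_apply_eq_zero hv hx <| by
      rw [sub_apply, hβ.coordDeriv_apply_self hq, hα.coordDeriv_apply_self hp]
  have hprop : U (deriv β (x q)) = (x p / x q) • U (deriv α (x p)) := by
    rw [hfderiv, sub_eq_zero] at hEuler
    rw [div_eq_inv_mul, mul_smul, ← hEuler, inv_smul_smul₀ hxq]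
  refine form2_eq_zero_of_pdv_eq_smul (u := U (deriv α (x p)))
    (c := fun k => EuclideanSpace.single k (1 : ℝ) q * (x p / x q) -
      EuclideanSpace.single k (1 : ℝ) p) (fun k => ?_) i j
  rw [pdv, hfderiv, hprop, smul_smul, sub_smul]

lemma exists_abs_form2_chordDir_le {ι : Type*} {f : ι → ℝ → E3} (hf : IsConicalLink f)
    (hg : Continuous g) {k l : ι} (hkl : k ≠ l) (p q : Fin n) :
    ∃ C, ∀ x i j, |form2 g (chordDir (f k) (f l) p q) x i j| ≤
      C * (lineWeight (x p) * lineWeight (x q)) := by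
  obtain ⟨G, hG0, hG⟩ := exists_abs_le_of_norm_eq_one hg
  obtain ⟨M, hM⟩ := (hf.conical k).exists_norm_coordDeriv_le p
  obtain ⟨N, hN⟩ := (hf.conical l).exists_norm_coordDeriv_le q
  obtain ⟨κ, hκ, hsep⟩ := hf.exists_separation_pair hkl
  refine ⟨G * ((N + M) / κ) ^ 2 * 4, fun x i j => ?_⟩
  set d := f l (x q) - f k (x p)
  have hne := hf.apply_ne hkl.symm (x q) (x p)
  by_cases hout : 1 ≤ |x p| ∧ 1 ≤ |x q|
  · rw [form2_chordDir_eq_zero (hf.conical k) (hf.conical l) hne hout.1 hout.2, abs_zero]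
    have := lineWeight_pos (x p)
    have := lineWeight_pos (x q)
    positivity
  have hdist : 1 + ‖(x p, x q)‖ ≤ ‖d‖ / κ := by
    rw [le_div_iff₀' hκ, norm_sub_rev]
    exact hsep (x p) (x q)
  calc |form2 g (chordDir (f k) (f l) p q) x i j|
      ≤ G * (‖coordDeriv (f l) q x - coordDeriv (f k) p x‖ / ‖d‖) ^ 2 :=
        abs_form2_unitv_comp_le hG (hasFDerivAt_chord (hf.conical k) (hf.conical l))
          (sub_ne_zero.mpr hne) i j
    _ ≤ G * ((N + M) / ‖d‖) ^ 2 := by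
        gcongr
        exact (norm_sub_le _ _).trans (add_le_add (hN x) (hM x))
    _ = G * ((N + M) / κ) ^ 2 * ((‖d‖ / κ) ^ 2)⁻¹ := by field_simp
    _ ≤ G * ((N + M) / κ) ^ 2 * (4 * (lineWeight (x p) * lineWeight (x q))) := by
        gcongr
        refine inv_sq_le_four_mul_lineWeight_mul ?_ ?_ ?_
        · exact (add_le_add_right (norm_fst_le (x p, x q)) 1).trans hdist
        · exact (add_le_add_right (norm_snd_le (x p, x q)) 1).trans hdist
        · rw [not_and_or, not_le, not_le] at hout
          exact hout.imp le_of_lt le_of_lt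
    _ = _ := (mul_assoc _ _ _).symm

end Chord

lemma integrable_wedge22_chordDir {ι : Type*} {f : ι → ℝ → E3} (hf : IsConicalLink f)
    {g : E3 → ℝ} (hg : Continuous g) {k l k' l' : ι} (hkl : k ≠ l) (hkl' : k' ≠ l')
    {p q p' q' : Fin 4} (hpq : Function.Injective ![p, q, p', q']) :
    Integrable (wedge22 g (chordDir (f k) (f l) p q) (chordDir (f k') (f l') p' q')) := by
  obtain ⟨A, hA⟩ := exists_abs_form2_chordDir_le hf hg hkl p q
  obtain ⟨B, hB⟩ := exists_abs_form2_chordDir_le hf hg hkl' p' q'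
  have hcont (i : ι) : Continuous (f i) := (hf.conical i).contDiff.continuous
  have hmajorant : Integrable (fun x : E4 => 6 * (A * B) * ∏ i, lineWeight (x i)) :=
    ((PiLp.volume_preserving_ofLp (Fin 4)).integrable_comp_of_integrable
      integrable_prod_lineWeight).const_mul _
  refine hmajorant.mono' (measurable_wedge22 hg.measurable
    (measurable_chordDir (hcont k) (hcont l) p q)
    (measurable_chordDir (hcont k') (hcont l') p' q')).aestronglyMeasurable
    (ae_of_all _ fun x => ?_)
  have hprod : ∏ i, lineWeight (x i) =
      lineWeight (x p) * lineWeight (x q) * (lineWeight (x p') * lineWeight (x q')) := by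
    rw [← (Finite.injective_iff_bijective.mp hpq).prod_comp, Fin.prod_univ_four]
    simp [mul_assoc]
  rw [Real.norm_eq_abs, hprod]
  refine (abs_wedge22_le (hA x) (hB x)).trans_eq ?_
  ring

/-! ### Tripods on three strands -/

/-- `ptY` as a continuous linear map. -/
def ptYL : E6 →L[ℝ] E3 := LinearMap.toContinuousLinearMap
  { toFun := ptY
    map_add' x y := by ext k; fin_cases k <;> simp [ptY, mk3]
    map_smul' c x := by ext k; fin_cases k <;> simp [ptY, mk3] }

lemma continuous_ptY : Continuous ptY := ptYL.continuous

/-- The orientations of the legs of a tripod: the first and the third leg point to the free vertex,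
the second one away from it. -/
def legSign : Fin 3 → ℝ := ![1, -1, 1]

lemma abs_legSign (k : Fin 3) : |legSign k| = 1 := by
  fin_cases k <;> simp [legSign]

lemma legSign_ne_zero (k : Fin 3) : legSign k ≠ 0 :=
  abs_ne_zero.mp (by simp [abs_legSign])

/-- The direction of the oriented `k`-th leg of a tripod with foot on the curve `γ`. -/
def legDir (γ : ℝ → E3) (k : Fin 3) (x : E6) : E3 :=
  unitv (legSign k • (ptY x - γ (footParams x k)))

section Leg

variable {γ : ℝ → E3} {g : E3 → ℝ} {x : E6} {k : Fin 3}

lemma measurable_legDir (hγ : Continuous γ) (k : Fin 3) : Measurable (legDir γ k) := by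
  have := continuous_ptY
  unfold legDir footParams
  exact measurable_unitv.comp (by fun_prop)

lemma IsConicalCurve.hasFDerivAt_leg (hγ : IsConicalCurve γ) (k : Fin 3) (x : E6) :
    HasFDerivAt (fun y : E6 => legSign k • (ptY y - γ (footParams y k)))
      (legSign k • (ptYL - coordDeriv γ (Fin.castAdd 3 k) x)) x :=
  (ptYL.hasFDerivAt.sub (hγ.hasFDerivAt_comp_coord (Fin.castAdd 3 k) x)).const_smul (legSign k)

lemma fderiv_legDir_apply_self (hγ : IsConicalCurve γ) (hne : ptY x ≠ γ (footParams x k))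
    (hx : 1 ≤ |footParams x k|) : fderiv ℝ (legDir γ k) x x = 0 := by
  refine fderiv_unitv_comp_apply_eq_zero (hγ.hasFDerivAt_leg k x)
    (smul_ne_zero (legSign_ne_zero k) (sub_ne_zero.mpr hne)) ?_
  rw [smul_apply, sub_apply, hγ.coordDeriv_apply_self hx]
  rfl

lemma exists_abs_form2_legDir_le (hγ : IsConicalCurve γ) (hg : Continuous g) (k : Fin 3) :
    ∃ C ≥ 0, ∀ x, ptY x ≠ γ (footParams x k) → ∀ i j,
      |form2 g (legDir γ k) x i j| ≤ C * (‖ptY x - γ (footParams x k)‖ ^ 2)⁻¹ := by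
  obtain ⟨G, hG0, hG⟩ := exists_abs_le_of_norm_eq_one hg
  obtain ⟨M, hM⟩ := hγ.exists_norm_coordDeriv_le (Fin.castAdd 3 k)
  refine ⟨G * (‖ptYL‖ + M) ^ 2, by positivity, fun x hx i j => ?_⟩
  have hne := smul_ne_zero (legSign_ne_zero k) (sub_ne_zero.mpr hx)
  refine (abs_form2_unitv_comp_le hG (hγ.hasFDerivAt_leg k x) hne i j).trans ?_
  rw [norm_smul, norm_smul, Real.norm_eq_abs, abs_legSign, one_mul, one_mul, div_pow,
    div_eq_mul_inv, ← mul_assoc]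
  gcongr
  exact (norm_sub_le _ _).trans (by gcongr; exact hM x)

end Leg

lemma mem_CYL_iff {f : Fin 3 → ℝ → E3} {x : E6} :
    x ∈ CYL f ↔ ∀ k, ptY x ≠ f k (footParams x k) := by
  simp only [Fin.forall_fin_succ, IsEmpty.forall_iff, and_true]
  rfl

lemma isOpen_CYL {f : Fin 3 → ℝ → E3} (hf : ∀ k, Continuous (f k)) : IsOpen (CYL f) := by
  have : CYL f = ⋂ k, {x | ptY x ≠ f k (footParams x k)} := by
    ext x
    simp [mem_CYL_iff]
  rw [this]
  have := continuous_ptY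
  unfold footParams
  exact isOpen_iInter_of_finite fun k => isOpen_ne_fun (by fun_prop) (by fun_prop)

lemma omegaYL_eq_wedge222_legDir (f : Fin 3 → ℝ → E3) (g : E3 → ℝ) :
    omegaYL f g = wedge222 g (legDir (f 0) 0) (legDir (f 1) 1) (legDir (f 2) 2) := by
  have hsub (u v : E3) : legSign 1 • (u - v) = v - u := (neg_one_smul ℝ _).trans (neg_sub _ _)
  have hone (k : Fin 3) (hk : k ≠ 1) (u : E3) : legSign k • u = u := by
    fin_cases k <;> simp [legSign] at hk ⊢
  simp only [omegaYL]
  unfold legDir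
  simp only [hsub, hone 0 (by decide), hone 2 (by decide)]
  rfl

lemma omegaYL_eq_zero {f : Fin 3 → ℝ → E3} (hf : ∀ k, IsConicalCurve (f k)) (g : E3 → ℝ) {x : E6}
    (hx : x ∈ CYL f) (hout : ∀ k, 1 ≤ |footParams x k|) : omegaYL f g x = 0 := by
  rw [omegaYL_eq_wedge222_legDir]
  refine wedge222_eq_zero_of_fderiv_apply_eq_zero g (fun k => legDir (f k) k) (w := x) ?_ fun k =>
    fderiv_legDir_apply_self (hf k) (mem_CYL_iff.mp hx k) (hout k)
  rintro rfl
  have := hout 0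
  norm_num [footParams] at this

lemma exists_abs_omegaYL_le {f : Fin 3 → ℝ → E3} (hf : IsConicalLink f) {g : E3 → ℝ}
    (hg : Continuous g) :
    ∃ C, ∀ x ∈ CYL f, |omegaYL f g x| ≤ C * ((∏ k, lineWeight (footParams x k)) *
      ∑ k, radialWeight ‖ptY x - f k (footParams x k)‖) := by
  choose C hCnonneg hC using fun k => exists_abs_form2_legDir_le (hf.conical k) hg k
  obtain ⟨κ, hκ, hsep⟩ := hf.exists_separation
  have hprod : 0 ≤ ∏ k, C k := Finset.prod_nonneg fun k _ => hCnonneg k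
  refine ⟨90 * (∏ k, C k) * (4 * (2 / κ + 1) ^ 4), fun x hx => ?_⟩
  have hne := mem_CYL_iff.mp hx
  by_cases hin : ∃ k, |footParams x k| ≤ 1
  · have hpos (k : Fin 3) : 0 < ‖ptY x - f k (footParams x k)‖ := norm_sub_pos_iff.mpr (hne k)
    have htriangle (k l : Fin 3) (hkl : k ≠ l) : κ * (1 + |footParams x k|) ≤
        ‖ptY x - f k (footParams x k)‖ + ‖ptY x - f l (footParams x l)‖ := by
      calc κ * (1 + |footParams x k|) ≤ κ * (1 + ‖(footParams x k, footParams x l)‖) := by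
            gcongr
            exact le_max_left _ _
        _ ≤ ‖f k (footParams x k) - f l (footParams x l)‖ := hsep k l hkl _ _
        _ ≤ _ := by
            rw [norm_sub_rev (ptY x)]
            exact norm_sub_le_norm_sub_add_norm_sub _ _ _
    rw [omegaYL_eq_wedge222_legDir, mul_assoc]
    calc _ ≤ 90 * ((∏ k, C k) * ∏ k, (‖ptY x - f k (footParams x k)‖ ^ 2)⁻¹) := by
          refine (abs_wedge222_le (hC 0 x (hne 0)) (hC 1 x (hne 1)) (hC 2 x (hne 2))).trans_eq ?_
          simp only [Fin.prod_univ_three]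
          ring
      _ ≤ _ := by
          rw [mul_assoc 90]
          gcongr
          exact prod_inv_sq_le hκ hpos htriangle hin
  · push Not at hin
    rw [omegaYL_eq_zero hf.conical g hx fun k => (hin k).le, abs_zero]
    exact mul_nonneg (by positivity) (mul_nonneg (Finset.prod_nonneg fun k _ =>
      (lineWeight_pos _).le) (Finset.sum_nonneg fun k _ => radialWeight_nonneg (norm_nonneg _)))

lemma integrableOn_omegaYL {f : Fin 3 → ℝ → E3} (hf : IsConicalLink f) {g : E3 → ℝ}
    (hg : Continuous g) : IntegrableOn (omegaYL f g) (CYL f) := by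
  have hcont (k : Fin 3) : Continuous (f k) := (hf.conical k).contDiff.continuous
  have hmeas : Measurable (omegaYL f g) := by
    rw [omegaYL_eq_wedge222_legDir]
    exact measurable_wedge222 hg.measurable (measurable_legDir (hcont 0) 0)
      (measurable_legDir (hcont 1) 1) (measurable_legDir (hcont 2) 2)
  obtain ⟨C, hC⟩ := exists_abs_omegaYL_le hf hg
  exact ((integrable_prod_lineWeight_mul_sum_radialWeight hcont).const_mul C).integrableOn.mono'
    hmeas.aestronglyMeasurable
    (ae_restrict_of_forall_mem (isOpen_CYL hcont).measurableSet hC)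

theorem statement6_general {f : Fin 3 → ℝ → E3} (hf : IsConicalLink f) {g : E3 → ℝ}
    (hg : Continuous g) :
    Integrable (omegaL1 f g) ∧ Integrable (omegaL2 f g) ∧ Integrable (omegaL3 f g) ∧
      IntegrableOn (omegaYL f g) (CYL f) :=
  ⟨integrable_wedge22_chordDir (k := 0) (l := 1) (k' := 0) (l' := 2) (p := 0) (q := 2) (p' := 1)
      (q' := 3) hf hg (by decide) (by decide) (by decide),
    integrable_wedge22_chordDir (k := 0) (l := 1) (k' := 2) (l' := 1) (p := 0) (q := 1) (p' := 3)
      (q' := 2) hf hg (by decide) (by decide) (by decide),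
    integrable_wedge22_chordDir (k := 0) (l := 2) (k' := 2) (l' := 1) (p := 0) (q := 2) (p' := 3)
      (q' := 1) hf hg (by decide) (by decide) (by decide),
    integrableOn_omegaYL hf hg⟩

/-- convergence of the configuration space integrals for 3-component
long links. For every 3-component long link `f`, every `ε > 0` and every 2-form `η` as
specified, the configuration space integrals `I_{𝒳₁}(f)`, `I_{𝒳₂}(f)`, `I_{𝒳₃}(f)` and
`I_𝒴(f)` converge absolutely. -/
theorem statement6 (f : Fin 3 → ℝ → E3) (hf : IsLongLink3 f) (ε : ℝ) (hε : 0 < ε)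
    (g : E3 → ℝ) (hg : IsEtaForm ε g) :
    IntegrableOn (omegaL1 f g) CL1 volume ∧ IntegrableOn (omegaL2 f g) CL2 volume ∧
      IntegrableOn (omegaL3 f g) CL3 volume ∧
      IntegrableOn (omegaYL f g) (CYL f) volume := by
  obtain ⟨h₁, h₂, h₃, hY⟩ := statement6_general hf.isConicalLink hg.1.continuous
  exact ⟨h₁.integrableOn, h₂.integrableOn, h₃.integrableOn, hY⟩

end
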